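/- arXiv:1312.6033 — 3 statements merged into one kernel-verified Lean document; each statement's English description precedes it below -/
import Mathlib

section
/- Assume ℒ_k(1) = 1 and that φ_k is locally (r,2)-Hölder continuous for all k ∈ ℕ₀. Then for every k, n ∈ ℕ, the operator ℒ^n_k maps r-Hölder continuous functions on Σ_k to r-Hölder continuous functions on Σ_{k+n}; moreover, for any r-Hölder continuous f : Σ_k → ℝ one has ‖ℒ^n_k(f)‖_∞ ≤ ‖f‖_∞, and the Hölder constant of index 1 of ℒ^n_k(f) is at most κ_f r^n + ‖f‖_∞ (B_{k+n} − 1), where κ_f is the Hölder constant of index n+1 of f. -/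
open MeasureTheory Real Filter

namespace NSShift

/-- The ambient sequence space `ℕ^ℕ`. -/
abbrev Seq := ℕ → ℕ

/-- The shift map `T`. -/
def shift (x : Seq) : Seq := fun i => x (i + 1)

/-- Prepend one symbol to a sequence. -/
def cons (a : ℕ) (x : Seq) : Seq := fun i =>
  match i with
  | 0 => a
  | j + 1 => x j

/-- The non-stationary shift space `Σ_n` determined by alphabets `W` and
transition relations `A` (`A n i j` means `α^n_{ij} = 1`). -/
def Sig (W : ℕ → Set ℕ) (A : ℕ → ℕ → ℕ → Prop) (n : ℕ) : Set Seq :=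
  {x | (∀ i, x i ∈ W (n + i)) ∧ ∀ i, A (n + i) (x i) (x (i + 1))}

/-- `x` and `y` agree in their first `k` coordinates (lie in a common `k`-cylinder). -/
def agrees (x y : Seq) (k : ℕ) : Prop := ∀ i < k, x i = y i

open scoped Classical in
/-- The shift metric `d_r(x,y) = r^{min{i : x_i ≠ y_i}}`. -/
noncomputable def dr (r : ℝ) (x y : Seq) : ℝ :=
  if x = y then 0 else r ^ sInf {i | x i ≠ y i}

/-- `f` is locally `(r,m)`-Hölder continuous with Hölder constant `κ` of index `m` on `S`:
`V_k(f) ≤ κ r^k` for all `k ≥ m`. -/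
def HolderOn (S : Set Seq) (r κ : ℝ) (m : ℕ) (f : Seq → ℝ) : Prop :=
  ∀ k, m ≤ k → ∀ x ∈ S, ∀ y ∈ S, agrees x y k → |f x - f y| ≤ κ * r ^ k

/-- The Birkhoff sum `S_n(φ_k) = Σ_{i=0}^{n-1} φ_{k+i} ∘ T^i`. -/
noncomputable def birkhoff (φ : ℕ → Seq → ℝ) (k n : ℕ) (x : Seq) : ℝ :=
  ∑ i ∈ Finset.range n, φ (k + i) (shift^[i] x)

/-- `log B_m = Σ_{i=1}^{m} κ_{m−i} r^i`. -/
noncomputable def logB (κ : ℕ → ℝ) (r : ℝ) (m : ℕ) : ℝ :=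
  ∑ i ∈ Finset.Icc 1 m, κ (m - i) * r ^ i

/-- `B_m = exp Σ_{i=1}^{m} κ_{m−i} r^i`. -/
noncomputable def Bconst (κ : ℕ → ℝ) (r : ℝ) (m : ℕ) : ℝ := Real.exp (logB κ r m)


open scoped Classical in
/-- The Ruelle operator `ℒ_k(f)(x) = Σ_{Ty=x} e^{φ_k(y)} f(y)`, for `x ∈ Σ_{k+1}`. -/
noncomputable def Ruelle (W : ℕ → Set ℕ) (A : ℕ → ℕ → ℕ → Prop) (φ : ℕ → Seq → ℝ)
    (k : ℕ) (f : Seq → ℝ) (x : Seq) : ℝ :=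
  ∑' a : ℕ, if cons a x ∈ Sig W A k then Real.exp (φ k (cons a x)) * f (cons a x) else 0

/-- The iterated Ruelle operator `ℒ^n_k = ℒ_{k+n-1} ∘ ⋯ ∘ ℒ_k`. -/
noncomputable def RuelleIter (W : ℕ → Set ℕ) (A : ℕ → ℕ → ℕ → Prop) (φ : ℕ → Seq → ℝ)
    (k : ℕ) : ℕ → (Seq → ℝ) → Seq → ℝ
  | 0 => fun f => f
  | n + 1 => fun f => Ruelle W A φ (k + n) (RuelleIter W A φ k n f)

theorem mem_cons {W : ℕ → Set ℕ} {A : ℕ → ℕ → ℕ → Prop} {k a : ℕ} {x : Seq}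
    (hx : x ∈ Sig W A (k + 1)) : cons a x ∈ Sig W A k ↔ a ∈ W k ∧ A k a (x 0) := by
  constructor
  · rintro ⟨h1, h2⟩
    exact ⟨h1 0, h2 0⟩
  · rintro ⟨h1, h2⟩
    refine ⟨fun i => ?_, fun i => ?_⟩
    · cases i with
      | zero => exact h1
      | succ j =>
        have := hx.1 j
        rw [show k + 1 + j = k + (j + 1) by ring] at this
        exact this
    · cases i with
      | zero => exact h2
      | succ j =>
        have := hx.2 j
        rw [show k + 1 + j = k + (j + 1) by ring] at this
        exact this

theorem exp_aux {d c : ℝ} (h : |d| ≤ c) : |Real.exp d - 1| ≤ Real.exp c - 1 := by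
  obtain ⟨h1, h2⟩ := abs_le.1 h
  have e1 := Real.exp_le_exp.2 h1
  have e2 := Real.exp_le_exp.2 h2
  have p := Real.exp_pos c
  have q : Real.exp c * Real.exp (-c) = 1 := by rw [← Real.exp_add]; simp
  have q' := Real.exp_pos (-c)
  rw [abs_le]
  constructor
  · nlinarith [sq_nonneg (Real.exp c - Real.exp (-c)), sq_nonneg (Real.exp c + Real.exp (-c) - 2),
      sq_nonneg (Real.exp c - 1)]
  · linarith

open scoped Classical in
theorem hasSum_w {W : ℕ → Set ℕ} {A : ℕ → ℕ → ℕ → Prop} {φ : ℕ → Seq → ℝ} {k : ℕ} {x : Seq}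
    (hn : Ruelle W A φ k (fun _ => 1) x = 1) :
    HasSum (fun a : ℕ => if cons a x ∈ Sig W A k then Real.exp (φ k (cons a x)) else 0) 1 := by
  have hn' : (∑' a : ℕ, if cons a x ∈ Sig W A k then Real.exp (φ k (cons a x)) else 0) = 1 := by
    simpa [Ruelle] using hn
  have hs : Summable
      (fun a : ℕ => if cons a x ∈ Sig W A k then Real.exp (φ k (cons a x)) else 0) := by
    by_contra hc
    rw [tsum_eq_zero_of_not_summable hc] at hn'
    exact zero_ne_one hn'
  rw [← hn']
  exact hs.hasSum

theorem step_bound {W : ℕ → Set ℕ} {A : ℕ → ℕ → ℕ → Prop} {φ : ℕ → Seq → ℝ} {k : ℕ} {x : Seq}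
    (hn : Ruelle W A φ k (fun _ => 1) x = 1) {g : Seq → ℝ} {M : ℝ}
    (hg : ∀ z ∈ Sig W A k, |g z| ≤ M) :
    Summable (fun a : ℕ => @ite ℝ (cons a x ∈ Sig W A k) (Classical.propDecidable _)
      (Real.exp (φ k (cons a x)) * g (cons a x)) 0) ∧ |Ruelle W A φ k g x| ≤ M := by
  classical
  have hs := (hasSum_w hn).mul_right M
  have hb : ∀ a : ℕ, ‖(@ite ℝ (cons a x ∈ Sig W A k) (Classical.propDecidable _)
      (Real.exp (φ k (cons a x)) * g (cons a x)) 0)‖ ≤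
      (@ite ℝ (cons a x ∈ Sig W A k) (Classical.propDecidable _)
        (Real.exp (φ k (cons a x))) 0) * M := by
    intro a
    by_cases h : cons a x ∈ Sig W A k
    · simp only [h, if_true, Real.norm_eq_abs, abs_mul, Real.abs_exp]
      exact mul_le_mul_of_nonneg_left (hg _ h) (Real.exp_pos _).le
    · simp [h]
  refine ⟨Summable.of_norm_bounded hs.summable hb, ?_⟩
  have := tsum_of_norm_bounded hs hb
  rw [one_mul, Real.norm_eq_abs] at this
  exact this

theorem step_diff {W : ℕ → Set ℕ} {A : ℕ → ℕ → ℕ → Prop} {φ : ℕ → Seq → ℝ} {k : ℕ} {x y : Seq}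
    (hx : x ∈ Sig W A (k + 1)) (hy : y ∈ Sig W A (k + 1)) (h0 : x 0 = y 0)
    (hnx : Ruelle W A φ k (fun _ => 1) x = 1) (hny : Ruelle W A φ k (fun _ => 1) y = 1)
    {g : Seq → ℝ} {M D c : ℝ}
    (hg : ∀ z ∈ Sig W A k, |g z| ≤ M)
    (hD : ∀ a, cons a x ∈ Sig W A k → cons a y ∈ Sig W A k → |g (cons a x) - g (cons a y)| ≤ D)
    (hc : ∀ a, cons a x ∈ Sig W A k → cons a y ∈ Sig W A k →
      |φ k (cons a x) - φ k (cons a y)| ≤ c) :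
    |Ruelle W A φ k g x - Ruelle W A φ k g y| ≤ D + M * (Real.exp c - 1) := by
  classical
  have hs := (hasSum_w hnx).mul_right (D + M * (Real.exp c - 1))
  have sx := (step_bound hnx hg).1
  have sy := (step_bound hny hg).1
  unfold Ruelle
  rw [← sx.tsum_sub sy, ← Real.norm_eq_abs]
  rw [one_mul] at hs
  refine tsum_of_norm_bounded hs fun a => ?_
  have hiff : cons a x ∈ Sig W A k ↔ cons a y ∈ Sig W A k := by
    rw [mem_cons hx, mem_cons hy, h0]
  by_cases h : cons a x ∈ Sig W A k
  · have h' := hiff.1 h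
    simp only [h, h', if_true, Real.norm_eq_abs]
    have e : Real.exp (φ k (cons a y)) =
        Real.exp (φ k (cons a x)) * Real.exp (φ k (cons a y) - φ k (cons a x)) := by
      rw [← Real.exp_add]; congr 1; ring
    have b1 := hD a h h'
    have b2 := exp_aux (c := c) (d := φ k (cons a y) - φ k (cons a x))
      (by rw [abs_sub_comm]; exact hc a h h')
    have b3 := hg _ h'
    rw [e]
    generalize Real.exp (φ k (cons a y) - φ k (cons a x)) = E at *
    rw [show Real.exp (φ k (cons a x)) * g (cons a x) - Real.exp (φ k (cons a x)) * E * g (cons a y)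
      = Real.exp (φ k (cons a x)) * ((g (cons a x) - g (cons a y)) - g (cons a y) * (E - 1)) by ring,
      abs_mul, Real.abs_exp]
    refine mul_le_mul_of_nonneg_left ?_ (Real.exp_pos _).le
    refine (abs_sub _ _).trans (add_le_add b1 ?_)
    rw [abs_mul]
    exact mul_le_mul b3 b2 (abs_nonneg _) ((abs_nonneg _).trans b3)
  · have h' : cons a y ∉ Sig W A k := fun q => h (hiff.2 q)
    simp [h, h']

theorem logB_succ (κ : ℕ → ℝ) (r : ℝ) (m : ℕ) :
    logB κ r (m + 1) = r * (logB κ r m + κ m) := by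
  have key : ∀ m, logB κ r m = ∑ j ∈ Finset.range m, κ (m - (j + 1)) * r ^ (j + 1) := by
    intro m
    unfold logB
    rw [Finset.range_eq_Ico, Finset.sum_Ico_add' (fun i => κ (m - i) * r ^ i) 0 m 1]
    rfl
  rw [key, key, Finset.sum_range_succ', mul_add, Finset.mul_sum]
  congr 1
  · refine Finset.sum_congr rfl fun j _ => ?_
    rw [show m + 1 - (j + 1 + 1) = m - (j + 1) by omega]
    ring
  · simp [mul_comm]

theorem logB_nonneg {κ : ℕ → ℝ} {r : ℝ} (hκ : ∀ k, 0 ≤ κ k) (hr : 0 < r) (m : ℕ) :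
    0 ≤ logB κ r m :=
  Finset.sum_nonneg fun i _ => mul_nonneg (hκ _) (pow_nonneg hr.le _)

theorem agrees_cons {x y : Seq} {m : ℕ} (a : ℕ) (h : agrees x y m) :
    agrees (cons a x) (cons a y) (m + 1) := by
  intro i hi
  cases i with
  | zero => rfl
  | succ j => exact h j (by omega)

theorem exp_convex {t L : ℝ} (ht0 : 0 ≤ t) (ht1 : t ≤ 1) :
    Real.exp (t * L) - 1 ≤ t * (Real.exp L - 1) := by
  have := convexOn_exp.2 (Set.mem_univ L) (Set.mem_univ 0) ht0 (sub_nonneg.2 ht1) (by ring)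
  simp only [smul_eq_mul, mul_zero, add_zero, Real.exp_zero] at this
  linarith

theorem iter_bound (W : ℕ → Set ℕ) (A : ℕ → ℕ → ℕ → Prop) (φ : ℕ → Seq → ℝ)
    (hnorm : ∀ k, ∀ x ∈ Sig W A (k + 1), Ruelle W A φ k (fun _ => 1) x = 1)
    (k : ℕ) (f : Seq → ℝ) (Mf : ℝ) (hMf : ∀ x ∈ Sig W A k, |f x| ≤ Mf) (n : ℕ) :
    ∀ x ∈ Sig W A (k + n), |RuelleIter W A φ k n f x| ≤ Mf := by
  induction n with
  | zero => exact hMf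
  | succ n ih => exact fun x hx => (step_bound (hnorm (k + n) x hx) ih).2

theorem iter_diff (W : ℕ → Set ℕ) (A : ℕ → ℕ → ℕ → Prop)
    (r : ℝ) (hr0 : 0 < r)
    (φ : ℕ → Seq → ℝ) (κ : ℕ → ℝ) (hκ : ∀ k, 0 ≤ κ k)
    (hφ : ∀ k, HolderOn (Sig W A k) r (κ k) 2 (φ k))
    (hnorm : ∀ k, ∀ x ∈ Sig W A (k + 1), Ruelle W A φ k (fun _ => 1) x = 1)
    (k N : ℕ) (f : Seq → ℝ) (κf Mf : ℝ) (hM0 : 0 ≤ Mf)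
    (hf : HolderOn (Sig W A k) r κf (N + 1) f)
    (hMf : ∀ x ∈ Sig W A k, |f x| ≤ Mf) (n : ℕ) :
    ∀ m, 1 ≤ m → N + 1 ≤ n + m → ∀ x ∈ Sig W A (k + n), ∀ y ∈ Sig W A (k + n), agrees x y m →
      |RuelleIter W A φ k n f x - RuelleIter W A φ k n f y| ≤
        κf * r ^ (n + m) + Mf * (Real.exp (r ^ m * logB κ r (k + n)) - 1) := by
  induction n with
  | zero =>
    intro m _ hN x hx y hy hxy
    have h := hf m (by omega) x hx y hy hxy
    have h2 : 0 ≤ r ^ m * logB κ r (k + 0) :=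
      mul_nonneg (pow_nonneg hr0.le _) (logB_nonneg hκ hr0 _)
    have h3 := Real.one_le_exp h2
    have h4 := mul_nonneg hM0 (sub_nonneg.2 h3)
    rw [zero_add]
    exact h.trans (le_add_of_nonneg_right h4)
  | succ n ih =>
    intro m hm hN x hx y hy hxy
    have hs := step_diff (k := k + n) (g := RuelleIter W A φ k n f) (M := Mf)
      (D := κf * r ^ (n + (m + 1)) + Mf * (Real.exp (r ^ (m + 1) * logB κ r (k + n)) - 1))
      (c := κ (k + n) * r ^ (m + 1))
      hx hy (hxy 0 (by omega)) (hnorm _ x hx) (hnorm _ y hy)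
      (iter_bound W A φ hnorm k f Mf hMf n)
      (fun a h h' => ih (m + 1) (by omega) (by omega) _ h _ h' (agrees_cons a hxy))
      (fun a h h' => hφ _ (m + 1) (by omega) _ h _ h' (agrees_cons a hxy))
    refine hs.trans ?_
    have e : r ^ m * logB κ r (k + (n + 1)) =
        r ^ (m + 1) * logB κ r (k + n) + κ (k + n) * r ^ (m + 1) := by
      rw [← add_assoc, logB_succ]; ring
    rw [e, Real.exp_add, show n + 1 + m = n + (m + 1) by ring]
    have h1 : 1 ≤ Real.exp (r ^ (m + 1) * logB κ r (k + n)) :=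
      Real.one_le_exp (mul_nonneg (pow_nonneg hr0.le _) (logB_nonneg hκ hr0 _))
    have h2 : 1 ≤ Real.exp (κ (k + n) * r ^ (m + 1)) :=
      Real.one_le_exp (mul_nonneg (hκ _) (pow_nonneg hr0.le _))
    nlinarith [mul_nonneg hM0 (mul_nonneg (sub_nonneg.2 h1) (sub_nonneg.2 h2))]

/-- If `ℒ_k(1) = 1` and every `φ_k` is locally `(r,2)`-Hölder, then `ℒ^n_k`
maps `r`-Hölder continuous functions on `Σ_k` to `r`-Hölder continuous functions on `Σ_{k+n}`:
the sup-norm does not increase, and the Hölder constant of index 1 of `ℒ^n_k(f)` is bounded by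
`κ_f r^n + ‖f‖_∞ (B_{k+n} − 1)`, where `κ_f` is a Hölder constant of index `n+1` of `f`. -/
theorem ruelle_iter_preserves_holder
    (W : ℕ → Set ℕ) (A : ℕ → ℕ → ℕ → Prop)
    (r : ℝ) (hr0 : 0 < r) (hr1 : r < 1)
    (φ : ℕ → Seq → ℝ) (κ : ℕ → ℝ) (hκ : ∀ k, 0 ≤ κ k)
    (hφ : ∀ k, HolderOn (Sig W A k) r (κ k) 2 (φ k))
    (hnorm : ∀ k, ∀ x ∈ Sig W A (k + 1), Ruelle W A φ k (fun _ => 1) x = 1)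
    (k n : ℕ) (f : Seq → ℝ) (κf Mf : ℝ)
    (hf : HolderOn (Sig W A k) r κf (n + 1) f)
    (hMf : ∀ x ∈ Sig W A k, |f x| ≤ Mf) :
    (∀ x ∈ Sig W A (k + n), |RuelleIter W A φ k n f x| ≤ Mf) ∧
      HolderOn (Sig W A (k + n)) r (κf * r ^ n + Mf * (Bconst κ r (k + n) - 1)) 1
        (RuelleIter W A φ k n f) := by
  have hb := iter_bound W A φ hnorm k f Mf hMf n
  refine ⟨hb, fun m hm x hx y hy hxy => ?_⟩
  have hM0 : 0 ≤ Mf := (abs_nonneg _).trans (hb x hx)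
  have h := iter_diff W A r hr0 φ κ hκ hφ hnorm k n f κf Mf hM0 hf hMf n m hm (by omega)
    x hx y hy hxy
  have h2 := mul_le_mul_of_nonneg_left (exp_convex (L := logB κ r (k + n))
    (pow_nonneg hr0.le m) (pow_le_one₀ hr0.le hr1.le)) hM0
  refine h.trans ?_
  unfold Bconst
  rw [pow_add]
  linarith

end NSShift
end

section
/- Assume (Σ_n, T, (φ_n)) satisfies property (H*) with Hölder parameter r. Then for every k ∈ ℕ₀ and every r-Hölder continuous function f_k : Σ_k → ℝ, one has D̄_{k+n_k}(ℒ^{n_k}_k(f_k)) ≤ D̄_k(f_k), i.e. the Ruelle iterate over n_k steps does not increase the Lipschitz constant taken with respect to the rescaled truncated metrics d̄. -/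
open MeasureTheory Real Filter

namespace NSShift

/-- `w` is a `k`-admissible word of length `len`. -/
def Adm (W : ℕ → Set ℕ) (A : ℕ → ℕ → ℕ → Prop) (k : ℕ) (w : ℕ → ℕ) (len : ℕ) : Prop :=
  (∀ i < len, w i ∈ W (k + i)) ∧ ∀ i, i + 1 < len → A (k + i) (w i) (w (i + 1))

/-- Prepend the first `len` symbols of `w` to the sequence `x` (the inverse branch `τ_w`). -/
def prepend (w : ℕ → ℕ) (len : ℕ) (x : Seq) : Seq := fun i =>
  if i < len then w i else x (i - len)

/-- The Lipschitz constant of `f` on `S` with respect to the distance function `d`,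
as the least constant `K ≥ 0` with `|f x − f y| ≤ K d(x,y)` on `S`. -/
noncomputable def LipC (S : Set Seq) (d : Seq → Seq → ℝ) (f : Seq → ℝ) : ℝ :=
  sInf {K : ℝ | 0 ≤ K ∧ ∀ x ∈ S, ∀ y ∈ S, |f x - f y| ≤ K * d x y}

/-- The Vasershtein (Wasserstein) distance of two Borel measures with respect to the
cost function `d`, as the infimum of `∫ d dm` over couplings `m`. -/
noncomputable def Wass (d : Seq → Seq → ℝ) (μ ν : Measure Seq) : ℝ :=
  sInf {t : ℝ | ∃ m : Measure (Seq × Seq),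
    m.map Prod.fst = μ ∧ m.map Prod.snd = ν ∧ t = ∫ p, d p.1 p.2 ∂m}

/-- The dual Ruelle operator `ℒ^*_k` on Borel measures, satisfying
`∫ f d(ℒ^*_k μ) = ∫ ℒ_k(f) dμ`. -/
noncomputable def dualRuelle (W : ℕ → Set ℕ) (A : ℕ → ℕ → ℕ → Prop) (φ : ℕ → Seq → ℝ)
    (k : ℕ) (μ : Measure Seq) : Measure Seq :=
  Measure.sum fun a : ℕ =>
    (μ.withDensity fun x =>
      ENNReal.ofReal ((Sig W A k).indicator (fun y => Real.exp (φ k y)) (cons a x))).map (cons a)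

/-- The iterated dual operator `(ℒ^n_k)^* = ℒ^*_k ∘ ⋯ ∘ ℒ^*_{k+n-1}`. -/
noncomputable def dualRuelleIter (W : ℕ → Set ℕ) (A : ℕ → ℕ → ℕ → Prop) (φ : ℕ → Seq → ℝ) :
    (k : ℕ) → ℕ → Measure Seq → Measure Seq
  | _, 0, μ => μ
  | k, n + 1, μ => dualRuelle W A φ k (dualRuelleIter W A φ (k + 1) n μ)

/-- A non-stationary shift space `((Σ_n), T, (φ_n))` satisfying property `(H*)`, together
with the choices of the constants `β`, `n_k`, base letters `o_k`, mixing times `m_k`,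
connecting words `u(x)` and lower bounds `C_k` used in the coupling construction. -/
structure HstarSystem where
  /-- the alphabets `𝒲¹_n` -/
  W : ℕ → Set ℕ
  /-- the transition matrices: `A n i j` iff `α^n_{ij} = 1` -/
  A : ℕ → ℕ → ℕ → Prop
  /-- the potentials `φ_n : Σ_n → ℝ` -/
  φ : ℕ → Seq → ℝ
  /-- the Hölder parameter -/
  r : ℝ
  /-- the parameter `β ∈ (0,1)` -/
  β : ℝ
  /-- the Hölder constants `κ_n` of `φ_n` -/
  κ : ℕ → ℝ
  /-- the finite set `ℐ` from the big preimages property -/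
  I : Finset ℕ
  /-- the infinite set `𝒦` from the big preimages property -/
  K : Set ℕ
  /-- the base letters `o_k ∈ 𝒲¹_k` -/
  o : ℕ → ℕ
  /-- the integers `n_k` -/
  nseq : ℕ → ℕ
  /-- the mixing times `m_k` -/
  mseq : ℕ → ℕ
  /-- the connecting words `u(x) ∈ 𝒲^{m_k}_k` (as sequences; only the first `m_k`
  symbols are relevant) -/
  u : ℕ → Seq → Seq
  /-- the constants `C_k` -/
  Cseq : ℕ → ℝ
  hr : 0 < r ∧ r < 1
  hβ : 0 < β ∧ β < 1
  κnonneg : ∀ n, 0 ≤ κ n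
  hKinf : K.Infinite
  /-- no zero rows -/
  row : ∀ n, ∀ i ∈ W n, ∃ j ∈ W (n + 1), A n i j
  /-- no zero columns -/
  col : ∀ n, ∀ i ∈ W (n + 1), ∃ j ∈ W n, A n j i
  /-- topological mixing -/
  mixing : ∀ k : ℕ, ∀ a ∈ W k, ∀ b : ℕ, ∃ N : ℕ, ∀ n, N ≤ n → b ∈ W (k + n) →
    ∃ x ∈ Sig W A k, x 0 = a ∧ x n = b
  /-- big preimages along `𝒦` -/
  bigPre : ∀ n ∈ K, 1 ≤ n → ∀ a ∈ W n, ∃ b ∈ I, (b : ℕ) ∈ W (n - 1) ∧ A (n - 1) b a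
  /-- `ℒ_n(1) = 1` -/
  normalized : ∀ k, ∀ x ∈ Sig W A (k + 1), Ruelle W A φ k (fun _ => 1) x = 1
  /-- `φ_n` is locally `(r,2)`-Hölder for `n ∉ 𝒦` -/
  holder2 : ∀ n ∉ K, HolderOn (Sig W A n) r (κ n) 2 (φ n)
  /-- `φ_n` is locally `(r,1)`-Hölder for `n ∈ 𝒦` -/
  holder1 : ∀ n ∈ K, HolderOn (Sig W A n) r (κ n) 1 (φ n)
  ho : ∀ k, o k ∈ W k
  /-- `n_k ≥ ⌊−log α_k / log r⌋ + 1` where `α_k = B_k/β` -/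
  hn : ∀ k, (⌊-Real.log (Bconst κ r k / β) / Real.log r⌋ + 1 : ℤ) ≤ (nseq k : ℤ)
  /-- `m_k ≥ 1`, `k + m_k ∈ 𝒦` -/
  hm_mem : ∀ k, 1 ≤ mseq k ∧ k + mseq k ∈ K
  /-- `(A_k ⋯ A_{k+m_k−2})_{o_k j} ≥ 1` for all `j ∈ ℐ ∩ 𝒲¹_{k+m_k−1}` -/
  hm_conn : ∀ k, ∀ j ∈ I, (j : ℕ) ∈ W (k + mseq k - 1) →
    ∃ w : ℕ → ℕ, Adm W A k w (mseq k) ∧ w 0 = o k ∧ w (mseq k - 1) = j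
  /-- minimality of `m_k` -/
  hm_min : ∀ k n, (1 ≤ n ∧ k + n ∈ K ∧ ∀ j ∈ I, (j : ℕ) ∈ W (k + n - 1) →
      ∃ w : ℕ → ℕ, Adm W A k w n ∧ w 0 = o k ∧ w (n - 1) = j) → mseq k ≤ n
  /-- the connecting word `u(x)` starts at `o_k`, ends in `ℐ`, and
  `x ∈ T^{m_k}([u(x)]_k)` -/
  hu : ∀ k, ∀ x ∈ Sig W A (k + mseq k), prepend (u k x) (mseq k) x ∈ Sig W A k ∧
    u k x 0 = o k ∧ u k x (mseq k - 1) ∈ I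
  hC_pos : ∀ k, 0 < Cseq k
  /-- `C_k` is a lower bound for `e^{S_{m_k} φ_k (τ_{u(x)} x)}` -/
  hC_le : ∀ k, ∀ x ∈ Sig W A (k + mseq k),
    Cseq k ≤ Real.exp (birkhoff φ k (mseq k) (prepend (u k x) (mseq k) x))

namespace HstarSystem

variable (S : HstarSystem)

/-- `α_k := B_k / β`. -/
noncomputable def alphaC (k : ℕ) : ℝ := Bconst S.κ S.r k / S.β

/-- the metric `d̄_k(x,y) := min{1, α_k d_r(x,y)}`. -/
noncomputable def dbar (k : ℕ) (x y : Seq) : ℝ := min 1 (S.alphaC k * dr S.r x y)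

/-- `s_k := 1 − (1 − r^{n_k} α_k) C_{k+n_k}/B_{k+n_k}`. -/
noncomputable def sconst (k : ℕ) : ℝ :=
  1 - (1 - S.r ^ S.nseq k * S.alphaC k) * S.Cseq (k + S.nseq k) / Bconst S.κ S.r (k + S.nseq k)

/-- `t_k := max{β, s_k}`. -/
noncomputable def tconst (k : ℕ) : ℝ := max S.β (S.sconst k)

/-- `l_k := n_k + m_{k+n_k}`. -/
def lconst (k : ℕ) : ℕ := S.nseq k + S.mseq (k + S.nseq k)

end HstarSystem

theorem aux_logB_succ (κ : ℕ → ℝ) (r : ℝ) (m : ℕ) :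
    logB κ r (m + 1) = r * (κ m + logB κ r m) := by
  unfold logB
  have h : ∀ n, ∑ i ∈ Finset.Icc 1 n, κ (n - i) * r ^ i
      = ∑ i ∈ Finset.range n, κ (n - (i + 1)) * r ^ (i + 1) := by
    intro n
    rw [Finset.range_eq_Ico, Finset.sum_Ico_add' (fun i => κ (n - i) * r ^ i) 0 n 1]
    rfl
  rw [h, h, Finset.sum_range_succ', mul_add, Finset.mul_sum, add_comm]
  congr 1
  · simp [mul_comm]
  · refine Finset.sum_congr rfl fun i _ => ?_
    have : m + 1 - (i + 1 + 1) = m - (i + 1) := by omega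
    rw [this]; ring

theorem aux_logB_nonneg (κ : ℕ → ℝ) (r : ℝ) (hr : 0 ≤ r) (hκ : ∀ n, 0 ≤ κ n) (m : ℕ) :
    0 ≤ logB κ r m :=
  Finset.sum_nonneg fun i _ => mul_nonneg (hκ _) (pow_nonneg hr _)

theorem aux_dr_le (r : ℝ) (hr : 0 < r ∧ r < 1) (x y : Seq) (l : ℕ) (h : agrees x y l) :
    dr r x y ≤ r ^ l := by
  unfold dr
  split_ifs with hxy
  · exact pow_nonneg hr.1.le _
  · have hne : {i | x i ≠ y i}.Nonempty := by
      by_contra hc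
      rw [Set.not_nonempty_iff_eq_empty] at hc
      apply hxy
      funext i
      by_contra hi
      have : i ∈ {i | x i ≠ y i} := hi
      rw [hc] at this
      exact this
    apply pow_le_pow_of_le_one hr.1.le hr.2.le
    by_contra hlt
    push Not at hlt
    exact Nat.sInf_mem hne (h _ hlt)

theorem aux_dr_eq (r : ℝ) (x y : Seq) (hxy : x ≠ y) :
    ∃ j, agrees x y j ∧ dr r x y = r ^ j := by
  refine ⟨sInf {i | x i ≠ y i}, ?_, ?_⟩
  · intro i hi
    have := Nat.notMem_of_lt_sInf hi
    simpa using this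
  · unfold dr
    rw [if_neg hxy]

theorem aux_cons_mem (W : ℕ → Set ℕ) (A : ℕ → ℕ → ℕ → Prop) (k a : ℕ) (x y : Seq)
    (hy : y ∈ Sig W A (k + 1)) (h0 : x 0 = y 0)
    (h : cons a x ∈ Sig W A k) : cons a y ∈ Sig W A k := by
  refine ⟨fun i => ?_, fun i => ?_⟩
  · cases i with
    | zero => exact h.1 0
    | succ j =>
      have := hy.1 j
      rw [show k + 1 + j = k + (j + 1) by ring] at this
      exact this
  · cases i with
    | zero =>
      have := h.2 0
      simp only [cons] at this ⊢
      rw [← h0]; exact this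
    | succ j =>
      have := hy.2 j
      rw [show k + 1 + j = k + (j + 1) by ring] at this
      exact this

open scoped Classical in
/-- the weights of the Ruelle operator -/
noncomputable def auxW (S : HstarSystem) (k : ℕ) (x : Seq) (a : ℕ) : ℝ :=
  if cons a x ∈ Sig S.W S.A k then Real.exp (S.φ k (cons a x)) else 0

theorem auxW_nonneg (S : HstarSystem) (k : ℕ) (x : Seq) (a : ℕ) : 0 ≤ auxW S k x a := by
  unfold auxW
  split_ifs
  · exact (Real.exp_pos _).le
  · exact le_rfl

theorem auxW_hasSum (S : HstarSystem) (k : ℕ) (x : Seq) (hx : x ∈ Sig S.W S.A (k + 1)) :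
    HasSum (auxW S k x) 1 := by
  have h := S.normalized k x hx
  have h2 : ∑' a, auxW S k x a = 1 := by
    rw [← h]
    unfold Ruelle auxW
    simp
  have hs : Summable (auxW S k x) := by
    by_contra hc
    rw [tsum_eq_zero_of_not_summable hc] at h2
    exact zero_ne_one h2
  rw [← h2]
  exact hs.hasSum

theorem aux_hasSum (S : HstarSystem) (k : ℕ) (x : Seq) (hx : x ∈ Sig S.W S.A (k + 1))
    (g : Seq → ℝ) (c d : ℝ) (hg : ∀ z ∈ Sig S.W S.A k, c ≤ g z ∧ g z ≤ c + d) (c' : ℝ) :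
    HasSum (fun a => auxW S k x a * (g (cons a x) - c'))
      (Ruelle S.W S.A S.φ k g x - c') := by
  have hw := auxW_hasSum S k x hx
  have hs : Summable (fun a => auxW S k x a * g (cons a x)) := by
    refine Summable.of_norm_bounded (hw.summable.mul_right (|c| + |d|)) fun a => ?_
    rw [norm_mul, Real.norm_eq_abs, Real.norm_eq_abs, abs_of_nonneg (auxW_nonneg S k x a)]
    by_cases ha : cons a x ∈ Sig S.W S.A k
    · apply mul_le_mul_of_nonneg_left _ (auxW_nonneg S k x a)
      obtain ⟨h1, h2⟩ := hg _ ha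
      rw [abs_le]
      constructor
      · linarith [neg_abs_le c, abs_nonneg d]
      · linarith [le_abs_self c, le_abs_self d]
    · simp [auxW, ha]
  have hR : Ruelle S.W S.A S.φ k g x = ∑' a, auxW S k x a * g (cons a x) := by
    unfold Ruelle auxW
    refine tsum_congr fun a => ?_
    split_ifs <;> simp
  have := hs.hasSum.sub (hw.mul_right c')
  rw [← hR, one_mul] at this
  simpa only [mul_sub] using this

theorem aux_bounds (S : HstarSystem) (k : ℕ) (f : Seq → ℝ) (c d : ℝ)
    (hf : ∀ z ∈ Sig S.W S.A k, c ≤ f z ∧ f z ≤ c + d) (n : ℕ) :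
    ∀ z ∈ Sig S.W S.A (k + n), c ≤ RuelleIter S.W S.A S.φ k n f z ∧
      RuelleIter S.W S.A S.φ k n f z ≤ c + d := by
  induction n with
  | zero => exact hf
  | succ n ih =>
    intro x hx
    change c ≤ Ruelle S.W S.A S.φ (k + n) (RuelleIter S.W S.A S.φ k n f) x ∧
      Ruelle S.W S.A S.φ (k + n) (RuelleIter S.W S.A S.φ k n f) x ≤ c + d
    have hs := aux_hasSum S (k + n) x hx _ c d ih
    constructor
    · have := (hs c).nonneg fun a => ?_
      · linarith
      · by_cases ha : cons a x ∈ Sig S.W S.A (k + n)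
        · exact mul_nonneg (auxW_nonneg _ _ _ _) (by linarith [(ih _ ha).1])
        · simp [auxW, ha]
    · have := (hs (c + d)).nonpos fun a => ?_
      · linarith
      · by_cases ha : cons a x ∈ Sig S.W S.A (k + n)
        · exact mul_nonpos_of_nonneg_of_nonpos (auxW_nonneg _ _ _ _)
            (by linarith [(ih _ ha).2])
        · simp [auxW, ha]

theorem aux_main (S : HstarSystem) (k : ℕ) (f : Seq → ℝ) (c d E : ℝ) (hE : 0 ≤ E)
    (hf : ∀ z ∈ Sig S.W S.A k, c ≤ f z ∧ f z ≤ c + d)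
    (hL : ∀ x ∈ Sig S.W S.A k, ∀ y ∈ Sig S.W S.A k, ∀ l, agrees x y l →
      |f x - f y| ≤ E * S.r ^ l) (n : ℕ) :
    ∀ j, 1 ≤ j → ∀ x ∈ Sig S.W S.A (k + n), ∀ y ∈ Sig S.W S.A (k + n), agrees x y j →
      RuelleIter S.W S.A S.φ k n f x - c ≤
        Real.exp (S.r ^ j * logB S.κ S.r (k + n)) *
          (RuelleIter S.W S.A S.φ k n f y - c + E * S.r ^ (n + j)) := by
  have hr0 : 0 ≤ S.r := S.hr.1.le
  induction n with
  | zero =>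
    intro j hj x hx y hy hxy
    change f x - c ≤ Real.exp (S.r ^ j * logB S.κ S.r (k + 0)) * (f y - c + E * S.r ^ (0 + j))
    have h1 : f x - c ≤ f y - c + E * S.r ^ (0 + j) := by
      have := hL x hx y hy j hxy
      rw [zero_add]
      linarith [le_abs_self (f x - f y)]
    have h2 : 0 ≤ f x - c := by linarith [(hf x hx).1]
    have h3 : 1 ≤ Real.exp (S.r ^ j * logB S.κ S.r (k + 0)) :=
      Real.one_le_exp (mul_nonneg (pow_nonneg hr0 _) (aux_logB_nonneg _ _ hr0 S.κnonneg _))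
    nlinarith
  | succ n ih =>
    intro j hj x hx y hy hxy
    change Ruelle S.W S.A S.φ (k + n) (RuelleIter S.W S.A S.φ k n f) x - c ≤ _ *
      (Ruelle S.W S.A S.φ (k + n) (RuelleIter S.W S.A S.φ k n f) y - c + _)
    have hb := aux_bounds S k f c d hf n
    have hsx := aux_hasSum S (k + n) x hx _ c d hb c
    have hsy := ((aux_hasSum S (k + n) y hy _ c d hb c).add
      ((auxW_hasSum S (k + n) y hy).mul_right (E * S.r ^ (n + 1 + j)))).mul_left
        (Real.exp (S.r ^ j * logB S.κ S.r (k + (n + 1))))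
    rw [one_mul] at hsy
    refine hasSum_le (fun a => ?_) hsx hsy
    have h0 : x 0 = y 0 := hxy 0 hj
    by_cases ha : cons a x ∈ Sig S.W S.A (k + n)
    · have hay : cons a y ∈ Sig S.W S.A (k + n) := aux_cons_mem _ _ _ _ _ _ hy h0 ha
      have hag : agrees (cons a x) (cons a y) (j + 1) := by
        intro i hi
        cases i with
        | zero => rfl
        | succ i => exact hxy i (by omega)
      have hI := ih (j + 1) (by omega) _ ha _ hay hag
      have hφ : |S.φ (k + n) (cons a x) - S.φ (k + n) (cons a y)|
          ≤ S.κ (k + n) * S.r ^ (j + 1) := by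
        by_cases hK : k + n ∈ S.K
        · exact S.holder1 _ hK _ (by omega) _ ha _ hay hag
        · exact S.holder2 _ hK _ (by omega) _ ha _ hay hag
      have hφ2 := (le_abs_self _).trans hφ
      have hw : auxW S (k + n) x a ≤
          Real.exp (S.κ (k + n) * S.r ^ (j + 1)) * auxW S (k + n) y a := by
        simp only [auxW, ha, hay, if_true]
        rw [← Real.exp_add]
        exact Real.exp_le_exp.mpr (by linarith)
      have hpos : 0 ≤ RuelleIter S.W S.A S.φ k n f (cons a x) - c := by
        linarith [(hb _ ha).1]
      have hexp : Real.exp (S.r ^ j * logB S.κ S.r (k + (n + 1))) =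
          Real.exp (S.κ (k + n) * S.r ^ (j + 1)) *
            Real.exp (S.r ^ (j + 1) * logB S.κ S.r (k + n)) := by
        rw [← Real.exp_add, ← add_assoc, aux_logB_succ]
        congr 1; ring
      rw [hexp]
      calc _ ≤ (Real.exp (S.κ (k + n) * S.r ^ (j + 1)) * auxW S (k + n) y a) * _ :=
            mul_le_mul hw hI hpos
              (mul_nonneg (Real.exp_pos _).le (auxW_nonneg _ _ _ _))
        _ = _ := by
          rw [show n + (j + 1) = n + 1 + j by ring]
          ring
    · have hay : cons a y ∉ Sig S.W S.A (k + n) := fun h =>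
        ha (aux_cons_mem _ _ _ _ _ _ hx h0.symm h)
      simp [auxW, ha, hay]

theorem aux_alpha_gt (S : HstarSystem) (k : ℕ) : 1 < S.alphaC k := by
  unfold HstarSystem.alphaC
  rw [lt_div_iff₀ S.hβ.1, one_mul]
  exact S.hβ.2.trans_le
    (Real.one_le_exp (aux_logB_nonneg _ _ S.hr.1.le S.κnonneg _))

theorem aux_alpha_pow (S : HstarSystem) (k : ℕ) : S.alphaC k * S.r ^ S.nseq k ≤ 1 := by
  have hα : 0 < S.alphaC k := zero_lt_one.trans (aux_alpha_gt S k)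
  have hlr : Real.log S.r < 0 := Real.log_neg S.hr.1 S.hr.2
  have h1 : (⌊-Real.log (S.alphaC k) / Real.log S.r⌋ + 1 : ℤ) ≤ (S.nseq k : ℤ) := S.hn k
  have h2 : -Real.log (S.alphaC k) / Real.log S.r < S.nseq k := by
    have := Int.lt_floor_add_one (-Real.log (S.alphaC k) / Real.log S.r)
    have h3 : ((⌊-Real.log (S.alphaC k) / Real.log S.r⌋ + 1 : ℤ) : ℝ) ≤ ((S.nseq k : ℤ) : ℝ) :=
      Int.cast_le.mpr h1
    push_cast at h3
    linarith
  rw [div_lt_iff_of_neg hlr] at h2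
  have hp : 0 < S.alphaC k * S.r ^ S.nseq k := mul_pos hα (pow_pos S.hr.1 _)
  rw [← Real.log_nonpos_iff hp.le, Real.log_mul hα.ne' (pow_pos S.hr.1 _).ne', Real.log_pow]
  linarith

theorem aux_onesided (S : HstarSystem) (k : ℕ) (f : Seq → ℝ) (K : ℝ) (hK : 0 ≤ K)
    (c : ℝ) (hf : ∀ z ∈ Sig S.W S.A k, c ≤ f z ∧ f z ≤ c + K)
    (hL : ∀ x ∈ Sig S.W S.A k, ∀ y ∈ Sig S.W S.A k, |f x - f y| ≤ K * S.dbar k x y)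
    (x : Seq) (hx : x ∈ Sig S.W S.A (k + S.nseq k))
    (y : Seq) (hy : y ∈ Sig S.W S.A (k + S.nseq k)) (hne : x ≠ y) :
    RuelleIter S.W S.A S.φ k (S.nseq k) f x - RuelleIter S.W S.A S.φ k (S.nseq k) f y
      ≤ K * S.dbar (k + S.nseq k) x y := by
  have hb := aux_bounds S k f c K hf (S.nseq k)
  obtain ⟨hx1, hx2⟩ := hb x hx
  obtain ⟨hy1, hy2⟩ := hb y hy
  obtain ⟨j, hj, hd⟩ := aux_dr_eq S.r x y hne
  have hα := aux_alpha_gt S (k + S.nseq k)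
  have hαk := aux_alpha_gt S k
  unfold HstarSystem.dbar
  rw [hd]
  rcases le_total 1 (S.alphaC (k + S.nseq k) * S.r ^ j) with h | h
  · rw [min_eq_left h]; linarith
  · rw [min_eq_right h]
    have hj1 : 1 ≤ j := by
      by_contra hc
      have : j = 0 := by omega
      subst this
      simp at h
      linarith
    have hm := aux_main S k f c K (K * S.alphaC k) (by positivity) hf (by
      intro u hu v hv l hl
      refine (hL u hu v hv).trans ?_
      rw [mul_assoc]
      refine mul_le_mul_of_nonneg_left ((min_le_right _ _).trans ?_) hK
      exact mul_le_mul_of_nonneg_left (aux_dr_le _ S.hr _ _ _ hl) (by linarith))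
      (S.nseq k) j hj1 x hx y hy hj
    set P := RuelleIter S.W S.A S.φ k (S.nseq k) f x
    set Q := RuelleIter S.W S.A S.φ k (S.nseq k) f y
    set L := logB S.κ S.r (k + S.nseq k) with hLdef
    have hLn : 0 ≤ L := aux_logB_nonneg _ _ S.hr.1.le S.κnonneg _
    have hrj : 0 < S.r ^ j := pow_pos S.hr.1 _
    have hm2 : Real.exp (-(S.r ^ j * L)) * (P - c) ≤
        Q - c + K * S.alphaC k * S.r ^ (S.nseq k + j) := by
      rw [Real.exp_neg, inv_mul_le_iff₀ (Real.exp_pos _)]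
      exact hm
    have he : 1 - S.r ^ j * L ≤ Real.exp (-(S.r ^ j * L)) := by
      linarith [Real.add_one_le_exp (-(S.r ^ j * L))]
    have h3 : (1 - S.r ^ j * L) * (P - c) ≤ Real.exp (-(S.r ^ j * L)) * (P - c) :=
      mul_le_mul_of_nonneg_right he (by linarith)
    have h4 : S.r ^ j * L * (P - c) ≤ S.r ^ j * L * K :=
      mul_le_mul_of_nonneg_left (by linarith) (by positivity)
    have h5 : K * S.alphaC k * S.r ^ (S.nseq k + j) ≤ K * S.r ^ j := by
      have := mul_le_mul_of_nonneg_left (aux_alpha_pow S k) (mul_nonneg hK hrj.le)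
      rw [pow_add]
      nlinarith
    have h6 : L + 1 ≤ S.alphaC (k + S.nseq k) := by
      unfold HstarSystem.alphaC
      rw [le_div_iff₀ S.hβ.1]
      have h7 : L + 1 ≤ Bconst S.κ S.r (k + S.nseq k) := Real.add_one_le_exp L
      nlinarith [S.hβ.2]
    have h8 := mul_le_mul_of_nonneg_left h6 (mul_nonneg hK hrj.le)
    nlinarith

/-- (Lemma, part (i).) Under property `(H*)`, the Ruelle iterate over `n_k`
steps does not increase the Lipschitz constant with respect to the rescaled truncated
metrics `d̄`. -/
theorem ruelle_iter_lipschitz_nonexpansive (S : HstarSystem) (k : ℕ)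
    (f : Seq → ℝ) (κf Mf : ℝ)
    (hf : HolderOn (Sig S.W S.A k) S.r κf 1 f)
    (hMf : ∀ x ∈ Sig S.W S.A k, |f x| ≤ Mf) :
    LipC (Sig S.W S.A (k + S.nseq k)) (S.dbar (k + S.nseq k))
        (RuelleIter S.W S.A S.φ k (S.nseq k) f) ≤
      LipC (Sig S.W S.A k) (S.dbar k) f := by
  have hLset : ∀ K : ℝ, (0 ≤ K ∧ ∀ x ∈ Sig S.W S.A k, ∀ y ∈ Sig S.W S.A k,
      |f x - f y| ≤ K * S.dbar k x y) → LipC (Sig S.W S.A (k + S.nseq k))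
        (S.dbar (k + S.nseq k)) (RuelleIter S.W S.A S.φ k (S.nseq k) f) ≤ K := by
    rintro K ⟨hK, hL⟩
    refine csInf_le ⟨0, fun _ h => h.1⟩ ⟨hK, ?_⟩
    have hc : ∃ c, ∀ z ∈ Sig S.W S.A k, c ≤ f z ∧ f z ≤ c + K := by
      rcases (Sig S.W S.A k).eq_empty_or_nonempty with he | hne
      · exact ⟨0, fun z hz => by simp [he] at hz⟩
      · have hbd : BddBelow (f '' Sig S.W S.A k) := by
          refine ⟨-Mf, ?_⟩
          rintro _ ⟨z, hz, rfl⟩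
          exact (abs_le.mp (hMf z hz)).1
        refine ⟨sInf (f '' Sig S.W S.A k), fun z hz =>
          ⟨csInf_le hbd ⟨z, hz, rfl⟩, ?_⟩⟩
        have : f z - K ≤ sInf (f '' Sig S.W S.A k) := by
          refine le_csInf (hne.image _) ?_
          rintro _ ⟨w, hw, rfl⟩
          have h1 := (le_abs_self _).trans (hL z hz w hw)
          have h2 : K * S.dbar k z w ≤ K * 1 :=
            mul_le_mul_of_nonneg_left (min_le_left _ _) hK
          linarith
        linarith
    obtain ⟨c, hc⟩ := hc
    intro x hx y hy
    by_cases hxy : x = y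
    · subst hxy
      simp [HstarSystem.dbar, dr]
    · rw [abs_le]
      have h1 := aux_onesided S k f K hK c hc hL x hx y hy hxy
      have h2 := aux_onesided S k f K hK c hc hL y hy x hx (Ne.symm hxy)
      have h3 : S.dbar (k + S.nseq k) y x = S.dbar (k + S.nseq k) x y := by
        simp only [HstarSystem.dbar, dr]
        rw [if_neg hxy, if_neg (Ne.symm hxy)]
        simp only [ne_comm]
      rw [h3] at h2
      constructor <;> linarith
  refine le_csInf ?_ hLset
  refine ⟨|κf| + 2 * |Mf|, by positivity, ?_⟩
  intro x hx y hy
  by_cases hxy : x = y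
  · subst hxy
    simp [HstarSystem.dbar, dr]
  · obtain ⟨j, hj, hd⟩ := aux_dr_eq S.r x y hxy
    have hα := aux_alpha_gt S k
    have hrj : 0 < S.r ^ j := pow_pos S.hr.1 _
    have hrj1 : S.r ^ j ≤ 1 := pow_le_one₀ S.hr.1.le S.hr.2.le
    have hdb : S.r ^ j ≤ S.dbar k x y := by
      unfold HstarSystem.dbar
      rw [hd]
      exact le_min hrj1 (by nlinarith)
    refine le_trans ?_ (mul_le_mul_of_nonneg_left hdb (by positivity))
    rcases Nat.eq_zero_or_pos j with h0 | h0
    · subst h0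
      have h1 := abs_le.mp (hMf x hx)
      have h2 := abs_le.mp (hMf y hy)
      rw [pow_zero, mul_one, abs_le]
      constructor <;> linarith [abs_nonneg κf, le_abs_self Mf]
    · have h1 := hf j h0 x hx y hy hj
      have h2 := mul_le_mul_of_nonneg_right (le_abs_self κf) hrj.le
      have h3 := mul_nonneg (abs_nonneg Mf) hrj.le
      linarith

end NSShift
end

section
/- Assume (Σ_n, T, (φ_n)) satisfies property (H*) with Hölder parameter r. Then for every k ∈ ℕ₀ and all Borel probability measures μ_{k+n_k}, ν_{k+n_k} on Σ_{k+n_k}, one has W_k((ℒ^{n_k}_k)*(μ_{k+n_k}), (ℒ^{n_k}_k)*(ν_{k+n_k})) ≤ W_{k+n_k}(μ_{k+n_k}, ν_{k+n_k}), i.e. the dual Ruelle operator over n_k steps does not increase the Vasershtein distance with respect to the metrics d̄. -/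
open MeasureTheory Real Filter

namespace NSShift

/-! ### discrete coupling weights -/

noncomputable def resid (P Q : ℕ → ENNReal) : ENNReal := ∑' c, (P c - min (P c) (Q c))

noncomputable def cw (P Q : ℕ → ENNReal) (a b : ℕ) : ENNReal :=
  (if a = b then min (P a) (Q a) else 0) +
    (P a - min (P a) (Q a)) * (Q b - min (P b) (Q b)) * (resid P Q)⁻¹

lemma resid_symm {P Q : ℕ → ENNReal} (hP : ∑' a, P a = 1) (hQ : ∑' a, Q a = 1) :
    ∑' c, (Q c - min (P c) (Q c)) = resid P Q := by
  have h1 : resid P Q + ∑' a, min (P a) (Q a) = 1 := by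
    rw [resid, ← ENNReal.tsum_add, ← hP]
    exact tsum_congr fun a => tsub_add_cancel_of_le (min_le_left _ _)
  have h2 : ∑' c, (Q c - min (P c) (Q c)) + ∑' a, min (P a) (Q a) = 1 := by
    rw [← ENNReal.tsum_add, ← hQ]
    exact tsum_congr fun a => tsub_add_cancel_of_le (min_le_right _ _)
  have h3 : ∑' a, min (P a) (Q a) ≠ ⊤ := by
    refine ne_top_of_le_ne_top ENNReal.one_ne_top ?_
    rw [← h1]; exact le_add_self
  exact (ENNReal.add_left_inj h3).1 (h2.trans h1.symm)

lemma resid_le_one {P Q : ℕ → ENNReal} (hP : ∑' a, P a = 1) : resid P Q ≤ 1 := by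
  rw [← hP]
  exact ENNReal.tsum_le_tsum fun a => tsub_le_self

lemma cw_row {P Q : ℕ → ENNReal} (hP : ∑' a, P a = 1) (hQ : ∑' a, Q a = 1) (a : ℕ) :
    ∑' b, cw P Q a b = P a := by
  unfold cw
  rw [ENNReal.tsum_add, tsum_ite_eq', ENNReal.tsum_mul_right, ENNReal.tsum_mul_left,
    resid_symm hP hQ]
  by_cases h : resid P Q = 0
  · have h0 : P a - min (P a) (Q a) = 0 := (ENNReal.tsum_eq_zero.1 h) a
    rw [h0, zero_mul, zero_mul, add_zero]
    exact le_antisymm (min_le_left _ _) (tsub_eq_zero_iff_le.1 h0)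
  · rw [mul_assoc, ENNReal.mul_inv_cancel h
      (ne_top_of_le_ne_top ENNReal.one_ne_top (resid_le_one hP)), mul_one]
    exact add_tsub_cancel_of_le (min_le_left _ _)

lemma cw_col {P Q : ℕ → ENNReal} (hP : ∑' a, P a = 1) (hQ : ∑' a, Q a = 1) (b : ℕ) :
    ∑' a, cw P Q a b = Q b := by
  unfold cw
  rw [ENNReal.tsum_add, tsum_ite_eq, ENNReal.tsum_mul_right, ENNReal.tsum_mul_right]
  change _ + resid P Q * _ * _ = _
  by_cases h : resid P Q = 0
  · have h0 : Q b - min (P b) (Q b) = 0 := by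
      have := resid_symm hP hQ
      rw [h] at this
      exact (ENNReal.tsum_eq_zero.1 this) b
    rw [h0, mul_zero, zero_mul, add_zero]
    exact le_antisymm (min_le_right _ _) (tsub_eq_zero_iff_le.1 h0)
  · rw [mul_comm (resid P Q), mul_assoc, ENNReal.mul_inv_cancel h
      (ne_top_of_le_ne_top ENNReal.one_ne_top (resid_le_one hP)), mul_one]
    exact add_tsub_cancel_of_le (min_le_right _ _)

lemma cw_cost_one {P Q : ℕ → ENNReal} (hP : ∑' a, P a = 1) (hQ : ∑' a, Q a = 1)
    (F : ℕ → ℕ → ENNReal) (hF : ∀ a b, F a b ≤ 1) :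
    ∑' a, ∑' b, cw P Q a b * F a b ≤ 1 := by
  calc ∑' a, ∑' b, cw P Q a b * F a b ≤ ∑' a, ∑' b, cw P Q a b :=
        ENNReal.tsum_le_tsum fun a => ENNReal.tsum_le_tsum fun b =>
          mul_le_of_le_one_right' (hF a b)
    _ = 1 := by simp_rw [cw_row hP hQ]; exact hP

lemma cw_cost {P Q : ℕ → ENNReal} (hP : ∑' a, P a = 1) (hQ : ∑' a, Q a = 1)
    (F : ℕ → ℕ → ENNReal) (hF : ∀ a b, F a b ≤ 1) (e : ENNReal) (he : ∀ a, F a a ≤ e)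
    (δ : ENNReal) (hδ : ∀ a, P a - Q a ≤ P a * δ) :
    ∑' a, ∑' b, cw P Q a b * F a b ≤ e + δ := by
  have hR : resid P Q ≤ δ := by
    calc resid P Q ≤ ∑' a, P a * δ := ENNReal.tsum_le_tsum fun a => by
          refine le_trans ?_ (hδ a)
          rcases le_total (P a) (Q a) with h | h
          · rw [min_eq_left h]; simp
          · rw [min_eq_right h]
      _ = δ := by rw [ENNReal.tsum_mul_right, hP, one_mul]
  have hq : ∑' a, min (P a) (Q a) ≤ 1 := by
    rw [← hP]; exact ENNReal.tsum_le_tsum fun a => min_le_left _ _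
  calc ∑' a, ∑' b, cw P Q a b * F a b
      ≤ ∑' a, ∑' b, ((if b = a then min (P a) (Q a) * e else 0) +
          (P a - min (P a) (Q a)) * (Q b - min (P b) (Q b)) * (resid P Q)⁻¹) := by
        refine ENNReal.tsum_le_tsum fun a => ENNReal.tsum_le_tsum fun b => ?_
        unfold cw
        rw [add_mul]
        refine add_le_add ?_ (mul_le_of_le_one_right' (hF a b))
        by_cases h : a = b
        · subst h; simp only [if_true]; exact mul_le_mul_right (he a) _
        · simp [h]
    _ = (∑' a, min (P a) (Q a)) * e + resid P Q * (resid P Q * (resid P Q)⁻¹) := by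
        simp_rw [ENNReal.tsum_add, tsum_ite_eq, ENNReal.tsum_mul_right, ENNReal.tsum_mul_left]
        rw [resid_symm hP hQ, ENNReal.tsum_mul_right, mul_assoc]
        rfl
    _ ≤ 1 * e + δ * 1 := by
        gcongr
        exact ENNReal.mul_inv_le_one _
    _ = e + δ := by simp

/-! ### the one step coupling of measures -/

lemma measurable_cons (a : ℕ) : Measurable (cons a) := by
  refine measurable_pi_iff.2 fun i => ?_
  cases i with
  | zero => exact measurable_const
  | succ j => exact measurable_pi_apply j

noncomputable def dualW (p : ℕ → Seq → ENNReal) (μ : Measure Seq) : Measure Seq :=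
  Measure.sum fun a : ℕ => (μ.withDensity (p a)).map (cons a)

lemma lintegral_dualW (p : ℕ → Seq → ENNReal) (hp : ∀ a, Measurable (p a)) (μ : Measure Seq)
    (f : Seq → ENNReal) (hf : Measurable f) :
    ∫⁻ x, f x ∂(dualW p μ) = ∫⁻ x, ∑' a, p a x * f (cons a x) ∂μ := by
  rw [dualW, lintegral_sum_measure, lintegral_tsum]
  · refine tsum_congr fun a => ?_
    rw [lintegral_map hf (measurable_cons a),
      lintegral_withDensity_eq_lintegral_mul _ (hp a) (g := fun x => f (cons a x))
        (hf.comp (measurable_cons a))]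
    rfl
  · exact fun a => ((hp a).mul (hf.comp (measurable_cons a))).aemeasurable

noncomputable def stepC (p : ℕ → Seq → ENNReal) (m : Measure (Seq × Seq)) :
    Measure (Seq × Seq) :=
  Measure.sum fun a : ℕ => Measure.sum fun b : ℕ =>
    (m.withDensity fun z => cw (fun c => p c z.1) (fun c => p c z.2) a b).map
      (fun z => (cons a z.1, cons b z.2))

lemma measurable_cw (p : ℕ → Seq → ENNReal) (hp : ∀ a, Measurable (p a)) (a b : ℕ) :
    Measurable fun z : Seq × Seq => cw (fun c => p c z.1) (fun c => p c z.2) a b := by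
  have h1 : ∀ c, Measurable fun z : Seq × Seq => p c z.1 := fun c => (hp c).comp measurable_fst
  have h2 : ∀ c, Measurable fun z : Seq × Seq => p c z.2 := fun c => (hp c).comp measurable_snd
  unfold cw resid
  refine Measurable.add ?_ (Measurable.mul (Measurable.mul ?_ ?_) (Measurable.inv ?_))
  · by_cases h : a = b
    · simp only [h, if_true]; exact (h1 b).min (h2 b)
    · simp only [h, if_false]; exact measurable_const
  · exact (h1 a).sub ((h1 a).min (h2 a))
  · exact (h2 b).sub ((h1 b).min (h2 b))
  · exact Measurable.tsum fun c => (h1 c).sub ((h1 c).min (h2 c))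

lemma lintegral_stepC (p : ℕ → Seq → ENNReal) (hp : ∀ a, Measurable (p a))
    (m : Measure (Seq × Seq)) (f : Seq × Seq → ENNReal) (hf : Measurable f) :
    ∫⁻ z, f z ∂(stepC p m) = ∫⁻ z, ∑' a, ∑' b,
      cw (fun c => p c z.1) (fun c => p c z.2) a b * f (cons a z.1, cons b z.2) ∂m := by
  have hc : ∀ a b, Measurable (fun z : Seq × Seq => (cons a z.1, cons b z.2)) := fun a b =>
    ((measurable_cons a).comp measurable_fst).prodMk ((measurable_cons b).comp measurable_snd)
  have hm : ∀ a b, Measurable fun z : Seq × Seq =>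
      cw (fun c => p c z.1) (fun c => p c z.2) a b * f (cons a z.1, cons b z.2) := fun a b =>
    (measurable_cw p hp a b).mul (hf.comp (hc a b))
  rw [stepC, lintegral_sum_measure, lintegral_tsum]
  · refine tsum_congr fun a => ?_
    rw [lintegral_sum_measure, lintegral_tsum]
    · refine tsum_congr fun b => ?_
      rw [lintegral_map hf (hc a b),
        lintegral_withDensity_eq_lintegral_mul _ (measurable_cw p hp a b)
          (g := fun z => f (cons a z.1, cons b z.2)) (hf.comp (hc a b))]
      rfl
    · exact fun b => (hm a b).aemeasurable
  · exact fun a => (Measurable.tsum fun b => hm a b).aemeasurable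

lemma stepC_fst (p : ℕ → Seq → ENNReal) (hp : ∀ a, Measurable (p a))
    (m : Measure (Seq × Seq)) (h : ∀ᵐ z ∂m, ∑' a, p a z.1 = 1 ∧ ∑' a, p a z.2 = 1) :
    (stepC p m).map Prod.fst = dualW p (m.map Prod.fst) := by
  refine Measure.ext_of_lintegral _ fun f hf => ?_
  rw [lintegral_map hf measurable_fst, lintegral_dualW p hp _ f hf,
    lintegral_stepC p hp m (fun z => f z.1) (hf.comp measurable_fst), lintegral_map _ measurable_fst]
  · refine lintegral_congr_ae ?_
    filter_upwards [h] with z hz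
    refine tsum_congr fun a => ?_
    rw [ENNReal.tsum_mul_right, cw_row hz.1 hz.2]
  · exact Measurable.tsum fun a => (hp a).mul (hf.comp (measurable_cons a))

lemma stepC_snd (p : ℕ → Seq → ENNReal) (hp : ∀ a, Measurable (p a))
    (m : Measure (Seq × Seq)) (h : ∀ᵐ z ∂m, ∑' a, p a z.1 = 1 ∧ ∑' a, p a z.2 = 1) :
    (stepC p m).map Prod.snd = dualW p (m.map Prod.snd) := by
  refine Measure.ext_of_lintegral _ fun f hf => ?_
  rw [lintegral_map hf measurable_snd, lintegral_dualW p hp _ f hf,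
    lintegral_stepC p hp m (fun z => f z.2) (hf.comp measurable_snd), lintegral_map _ measurable_snd]
  · refine lintegral_congr_ae ?_
    filter_upwards [h] with z hz
    rw [ENNReal.tsum_comm]
    refine tsum_congr fun a => ?_
    rw [ENNReal.tsum_mul_right, cw_col hz.1 hz.2]
  · exact Measurable.tsum fun a => (hp a).mul (hf.comp (measurable_cons a))

/-! ### the metric -/

lemma dr_nonneg {r : ℝ} (hr : 0 < r) (x y : Seq) : 0 ≤ dr r x y := by
  unfold dr; split_ifs
  · exact le_rfl
  · positivity

lemma exists_ne_of_ne {x y : Seq} (h : x ≠ y) : {i | x i ≠ y i}.Nonempty := by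
  by_contra hc
  rw [Set.not_nonempty_iff_eq_empty] at hc
  refine h (funext fun i => ?_)
  by_contra hi
  have : i ∈ {i | x i ≠ y i} := hi
  rw [hc] at this
  exact this

lemma ofReal_dr {r : ℝ} (hr : 0 < r) (hr1 : r < 1) (x y : Seq) :
    ENNReal.ofReal (dr r x y) = ⨆ i, if x i = y i then 0 else ENNReal.ofReal (r ^ i) := by
  by_cases h : x = y
  · subst h; simp [dr]
  · have hne := exists_ne_of_ne h
    have hmem : x (sInf {i | x i ≠ y i}) ≠ y (sInf {i | x i ≠ y i}) := Nat.sInf_mem hne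
    simp only [dr, if_neg h]
    refine le_antisymm ?_ (iSup_le fun i => ?_)
    · refine le_iSup_of_le (sInf {i | x i ≠ y i}) ?_
      rw [if_neg hmem]
    · split_ifs with hi
      · exact zero_le
      · exact ENNReal.ofReal_le_ofReal
          (pow_le_pow_of_le_one hr.le hr1.le (Nat.sInf_le hi))

lemma measurable_dr {r : ℝ} (hr : 0 < r) (hr1 : r < 1) :
    Measurable fun z : Seq × Seq => dr r z.1 z.2 := by
  have h : (fun z : Seq × Seq => dr r z.1 z.2) = fun z =>
      (⨆ i, if z.1 i = z.2 i then 0 else ENNReal.ofReal (r ^ i)).toReal := by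
    funext z
    rw [← ofReal_dr hr hr1, ENNReal.toReal_ofReal (dr_nonneg hr _ _)]
  rw [h]
  refine Measurable.ennreal_toReal (Measurable.iSup fun i => ?_)
  refine Measurable.ite (measurableSet_eq_fun ?_ ?_) measurable_const measurable_const
  · exact (measurable_pi_apply i).comp measurable_fst
  · exact (measurable_pi_apply i).comp measurable_snd

lemma cons_inj (a : ℕ) {x y : Seq} (h : cons a x = cons a y) : x = y :=
  funext fun i => congrFun h (i + 1)

lemma dr_cons {r : ℝ} (a : ℕ) (x y : Seq) :
    dr r (cons a x) (cons a y) = r * dr r x y := by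
  by_cases h : x = y
  · subst h; simp [dr]
  · have h' : cons a x ≠ cons a y := fun hc => h (cons_inj a hc)
    simp only [dr, if_neg h, if_neg h']
    rw [← pow_succ']
    congr 1
    have hne := exists_ne_of_ne h
    have hmem : x (sInf {i | x i ≠ y i}) ≠ y (sInf {i | x i ≠ y i}) := Nat.sInf_mem hne
    refine le_antisymm (Nat.sInf_le hmem) ?_
    refine le_csInf (exists_ne_of_ne h') fun b hb => ?_
    cases b with
    | zero => exact absurd rfl hb
    | succ j => exact Nat.succ_le_succ (Nat.sInf_le hb)

/-- the modified cost -/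
noncomputable def FC (r c : ℝ) (z : Seq × Seq) : ENNReal :=
  if z.1 0 = z.2 0 then min 1 (ENNReal.ofReal (c * dr r z.1 z.2)) else 1

lemma FC_le_one (r c : ℝ) (z : Seq × Seq) : FC r c z ≤ 1 := by
  unfold FC; split_ifs
  · exact min_le_left _ _
  · exact le_rfl

lemma measurable_FC {r : ℝ} (hr : 0 < r) (hr1 : r < 1) (c : ℝ) : Measurable (FC r c) := by
  unfold FC
  refine Measurable.ite (measurableSet_eq_fun ?_ ?_) ?_ measurable_const
  · exact (measurable_pi_apply 0).comp measurable_fst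
  · exact (measurable_pi_apply 0).comp measurable_snd
  · exact measurable_const.min ((measurable_dr hr hr1).const_mul c).ennreal_ofReal

/-! ### the weights of the system -/

noncomputable def wt (S : HstarSystem) (j a : ℕ) (x : Seq) : ENNReal :=
  ENNReal.ofReal ((Sig S.W S.A j).indicator (fun y => Real.exp (S.φ j y)) (cons a x))

lemma dualRuelle_eq (S : HstarSystem) (j : ℕ) (μ : Measure Seq) :
    dualRuelle S.W S.A S.φ j μ = dualW (wt S j) μ := rfl

lemma measurableSet_Sig (W : ℕ → Set ℕ) (A : ℕ → ℕ → ℕ → Prop) (n : ℕ) :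
    MeasurableSet (Sig W A n) := by
  have : Sig W A n = (⋂ i, (fun x : Seq => x i) ⁻¹' (W (n + i))) ∩
      ⋂ i, (fun x : Seq => (x i, x (i + 1))) ⁻¹' {q | A (n + i) q.1 q.2} := by
    ext x; simp [Sig]
  rw [this]
  refine (MeasurableSet.iInter fun i => ?_).inter (MeasurableSet.iInter fun i => ?_)
  · exact measurable_pi_apply i (MeasurableSet.of_discrete)
  · exact ((measurable_pi_apply i).prodMk (measurable_pi_apply (i + 1)))
      (MeasurableSet.of_discrete)

lemma holder (S : HstarSystem) (j : ℕ) : HolderOn (Sig S.W S.A j) S.r (S.κ j) 2 (S.φ j) := by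
  by_cases h : j ∈ S.K
  · exact fun k hk => S.holder1 j h k (by omega)
  · exact S.holder2 j h

lemma continuousOn_phi (S : HstarSystem) (j : ℕ) : ContinuousOn (S.φ j) (Sig S.W S.A j) := by
  intro x hx
  refine Metric.tendsto_nhds.2 fun ε hε => ?_
  have ht : Tendsto (fun k : ℕ => S.κ j * S.r ^ k) atTop (nhds (S.κ j * 0)) :=
    (tendsto_pow_atTop_nhds_zero_of_lt_one S.hr.1.le S.hr.2).const_mul _
  rw [mul_zero] at ht
  obtain ⟨k, hk, hk2⟩ := ((ht.eventually (gt_mem_nhds hε)).and (eventually_ge_atTop 2)).exists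
  have hn : {y : Seq | ∀ i ∈ Set.Iio k, y i ∈ ({x i} : Set ℕ)} ∈ nhds x :=
    set_pi_mem_nhds (Set.finite_Iio k) fun i _ => by simp
  filter_upwards [mem_nhdsWithin_of_mem_nhds hn, self_mem_nhdsWithin] with y hy hyS
  rw [Real.dist_eq]
  exact (holder S j k hk2 y hyS x hx fun i hi => hy i hi).trans_lt hk

lemma measurable_wt (S : HstarSystem) (j a : ℕ) : Measurable (wt S j a) := by
  suffices hh : Measurable ((Sig S.W S.A j).indicator (fun y => Real.exp (S.φ j y))) from
    Measurable.ennreal_ofReal (hh.comp (measurable_cons a))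
  have h : ContinuousOn (fun y => Real.exp (S.φ j y)) (Sig S.W S.A j) :=
    Real.continuous_exp.comp_continuousOn (continuousOn_phi S j)
  classical
  rw [← Set.piecewise_eq_indicator]
  exact h.measurable_piecewise continuousOn_const (measurableSet_Sig _ _ _)

lemma tsum_wt (S : HstarSystem) (j : ℕ) {x : Seq} (hx : x ∈ Sig S.W S.A (j + 1)) :
    ∑' a, wt S j a x = 1 := by
  have h := S.normalized j x hx
  unfold Ruelle at h
  have he : (fun a : ℕ => (Sig S.W S.A j).indicator (fun y => Real.exp (S.φ j y)) (cons a x)) =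
      fun a => @ite _ (cons a x ∈ Sig S.W S.A j) (Classical.propDecidable _)
        (Real.exp (S.φ j (cons a x)) * 1) 0 := by
    funext a
    by_cases ha : cons a x ∈ Sig S.W S.A j <;> simp [ha]
  rw [← he] at h
  unfold wt
  rw [← ENNReal.ofReal_tsum_of_nonneg, h, ENNReal.ofReal_one]
  · exact fun a => Set.indicator_nonneg (fun _ _ => (Real.exp_pos _).le) _
  · by_contra hc
    rw [tsum_eq_zero_of_not_summable hc] at h
    exact zero_ne_one h

lemma cons_mem (S : HstarSystem) {j : ℕ} {x y : Seq} (hy : y ∈ Sig S.W S.A (j + 1))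
    (h0 : x 0 = y 0) {a : ℕ} (h : cons a x ∈ Sig S.W S.A j) : cons a y ∈ Sig S.W S.A j := by
  refine ⟨fun i => ?_, fun i => ?_⟩
  · cases i with
    | zero => exact h.1 0
    | succ i =>
      have := hy.1 i
      rw [show j + 1 + i = j + (i + 1) by ring] at this
      exact this
  · cases i with
    | zero =>
      have h2 : S.A (j + 0) a (x 0) := h.2 0
      rw [h0] at h2
      exact h2
    | succ i =>
      have := hy.2 i
      rw [show j + 1 + i = j + (i + 1) by ring] at this
      exact this

lemma wt_sub (S : HstarSystem) (j a : ℕ) {x y : Seq} (hx : x ∈ Sig S.W S.A (j + 1))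
    (hy : y ∈ Sig S.W S.A (j + 1)) (h0 : x 0 = y 0) :
    wt S j a x - wt S j a y ≤ wt S j a x * ENNReal.ofReal (S.κ j * (S.r * dr S.r x y)) := by
  by_cases hxy : x = y
  · subst hxy; simp
  by_cases hm : cons a x ∈ Sig S.W S.A j
  · have hm' := cons_mem S hy h0 hm
    unfold wt
    rw [Set.indicator_of_mem hm, Set.indicator_of_mem hm',
      ← ENNReal.ofReal_sub _ (Real.exp_pos _).le, ← ENNReal.ofReal_mul (Real.exp_pos _).le]
    refine ENNReal.ofReal_le_ofReal ?_
    have hne := exists_ne_of_ne hxy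
    set q := sInf {i | x i ≠ y i} with hq
    have hq1 : 1 ≤ q := by
      refine le_csInf hne fun b hb => ?_
      rcases Nat.eq_zero_or_pos b with h | h
      · subst h; exact absurd h0 hb
      · exact h
    have hag : agrees (cons a x) (cons a y) (q + 1) := by
      intro i hi
      cases i with
      | zero => rfl
      | succ i =>
        change x i = y i
        by_contra hc
        have : q ≤ i := Nat.sInf_le hc
        omega
    have hh := holder S j (q + 1) (by omega) _ hm _ hm' hag
    have hd : S.r * dr S.r x y = S.r ^ (q + 1) := by
      rw [dr, if_neg hxy, ← pow_succ']
    rw [hd]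
    set u := S.φ j (cons a x)
    set v := S.φ j (cons a y)
    have h1 : u - v ≤ S.κ j * S.r ^ (q + 1) := (le_abs_self _).trans hh
    have h2 : Real.exp v = Real.exp u * Real.exp (v - u) := by
      rw [← Real.exp_add]; congr 1; ring
    have h3 := Real.add_one_le_exp (v - u)
    rw [h2]
    nlinarith [Real.exp_pos u]
  · unfold wt
    rw [Set.indicator_of_notMem hm]
    simp

lemma step_cost (S : HstarSystem) (j : ℕ) {c : ℝ} (hc : 0 ≤ c) {x y : Seq}
    (hx : x ∈ Sig S.W S.A (j + 1)) (hy : y ∈ Sig S.W S.A (j + 1)) :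
    ∑' a, ∑' b, cw (fun e => wt S j e x) (fun e => wt S j e y) a b *
      FC S.r c (cons a x, cons b y) ≤ FC S.r (S.r * (c + S.κ j)) (x, y) := by
  have h1 := cw_cost_one (tsum_wt S j hx) (tsum_wt S j hy)
    (fun a b => FC S.r c (cons a x, cons b y)) (fun a b => FC_le_one _ _ _)
  unfold FC at h1 ⊢
  split_ifs with h0
  · refine le_min h1 ?_
    have h2 := cw_cost (tsum_wt S j hx) (tsum_wt S j hy)
      (fun a b => FC S.r c (cons a x, cons b y)) (fun a b => FC_le_one _ _ _)
      (ENNReal.ofReal (c * (S.r * dr S.r x y)))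
      (fun a => by
        unfold FC
        rw [if_pos (show (cons a x, cons a y).1 0 = (cons a x, cons a y).2 0 from rfl)]
        simp only [dr_cons]
        exact min_le_right _ _)
      (ENNReal.ofReal (S.κ j * (S.r * dr S.r x y))) (fun a => wt_sub S j a hx hy h0)
    have hd := dr_nonneg S.hr.1 x y
    have hr := S.hr.1.le
    have hk := S.κnonneg j
    rw [← ENNReal.ofReal_add (by positivity) (by positivity)] at h2
    unfold FC at h2
    refine h2.trans (le_of_eq ?_)
    congr 1
    ring
  · exact h1

lemma dualRuelle_supp (S : HstarSystem) (j : ℕ) (μ : Measure Seq) :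
    ∀ᵐ x ∂(dualRuelle S.W S.A S.φ j μ), x ∈ Sig S.W S.A j := by
  rw [dualRuelle_eq, ae_iff]
  have hs : MeasurableSet {x | x ∉ Sig S.W S.A j} := (measurableSet_Sig _ _ _).compl
  rw [← lintegral_indicator_one hs, lintegral_dualW _ (measurable_wt S j) _ _
    (measurable_one.indicator hs)]
  refine (lintegral_congr fun x => ?_).trans lintegral_zero
  refine ENNReal.tsum_eq_zero.2 fun a => ?_
  by_cases h : cons a x ∈ Sig S.W S.A j
  · simp [h]
  · simp [wt, h]

noncomputable def accC (κ : ℕ → ℝ) (r : ℝ) : ℕ → ℕ → ℝ → ℝ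
  | _, 0, c => c
  | k, n + 1, c => accC κ r (k + 1) n (r * (c + κ k))

lemma accC_eq (κ : ℕ → ℝ) (r : ℝ) (k n : ℕ) (c : ℝ) :
    accC κ r k n c = r ^ n * c + ∑ i ∈ Finset.Icc 1 n, κ (k + n - i) * r ^ i := by
  induction n generalizing k c with
  | zero => simp [accC]
  | succ n ih =>
    rw [accC, ih, Finset.sum_Icc_succ_top (by omega)]
    rw [show k + (n + 1) - (n + 1) = k by omega, show k + 1 + n = k + (n + 1) by ring]
    ring

/-- iterated coupling, also keeping track of the supports -/
lemma iter_couple (S : HstarSystem) (n : ℕ) : ∀ (k : ℕ) (m : Measure (Seq × Seq)),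
    (∀ᵐ x ∂(m.map Prod.fst), x ∈ Sig S.W S.A (k + n)) →
    (∀ᵐ x ∂(m.map Prod.snd), x ∈ Sig S.W S.A (k + n)) →
    (∀ᵐ x ∂(dualRuelleIter S.W S.A S.φ k n (m.map Prod.fst)), x ∈ Sig S.W S.A k) ∧
    (∀ᵐ x ∂(dualRuelleIter S.W S.A S.φ k n (m.map Prod.snd)), x ∈ Sig S.W S.A k) ∧
    ∃ m' : Measure (Seq × Seq),
      m'.map Prod.fst = dualRuelleIter S.W S.A S.φ k n (m.map Prod.fst) ∧
      m'.map Prod.snd = dualRuelleIter S.W S.A S.φ k n (m.map Prod.snd) ∧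
      ∀ c : ℝ, 0 ≤ c →
      ∫⁻ z, FC S.r c z ∂m' ≤ ∫⁻ z, FC S.r (accC S.κ S.r k n c) z ∂m := by
  induction n with
  | zero => exact fun k m h1 h2 => ⟨h1, h2, m, rfl, rfl, fun c _ => le_rfl⟩
  | succ n ih =>
    intro k m h1 h2
    rw [show k + (n + 1) = k + 1 + n by ring] at h1 h2
    obtain ⟨s1, s2, m', e1, e2, hm'⟩ := ih (k + 1) m h1 h2
    rw [← e1] at s1
    rw [← e2] at s2
    have t1 := ae_of_ae_map measurable_fst.aemeasurable s1
    have t2 := ae_of_ae_map measurable_snd.aemeasurable s2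
    have hs : ∀ᵐ z ∂m', ∑' a, wt S k a z.1 = 1 ∧ ∑' a, wt S k a z.2 = 1 := by
      filter_upwards [t1, t2] with z hz1 hz2
      exact ⟨tsum_wt S k hz1, tsum_wt S k hz2⟩
    refine ⟨dualRuelle_supp S k _, dualRuelle_supp S k _, stepC (wt S k) m', ?_, ?_, ?_⟩
    · rw [stepC_fst _ (measurable_wt S k) _ hs, e1]; rfl
    · rw [stepC_snd _ (measurable_wt S k) _ hs, e2]; rfl
    · intro c hc
      have hc' : 0 ≤ S.r * (c + S.κ k) :=
        mul_nonneg S.hr.1.le (add_nonneg hc (S.κnonneg k))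
      refine le_trans ?_ (hm' _ hc')
      rw [lintegral_stepC _ (measurable_wt S k) _ _ (measurable_FC S.hr.1 S.hr.2 c)]
      refine lintegral_mono_ae ?_
      filter_upwards [t1, t2] with z hz1 hz2
      exact step_cost S k hc hz1 hz2

lemma one_le_B (S : HstarSystem) (k : ℕ) : 1 + logB S.κ S.r k ≤ Bconst S.κ S.r k := by
  have := Real.add_one_le_exp (logB S.κ S.r k)
  unfold Bconst; linarith

lemma logB_nonneg_s4 (S : HstarSystem) (k : ℕ) : 0 ≤ logB S.κ S.r k :=
  Finset.sum_nonneg fun i _ => mul_nonneg (S.κnonneg _) (pow_nonneg S.hr.1.le _)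

lemma B_le_alpha (S : HstarSystem) (k : ℕ) : Bconst S.κ S.r k ≤ S.alphaC k := by
  unfold HstarSystem.alphaC
  exact le_div_self (Real.exp_pos _).le S.hβ.1 S.hβ.2.le

lemma alpha_ge_one (S : HstarSystem) (k : ℕ) : 1 ≤ S.alphaC k := by
  linarith [one_le_B S k, logB_nonneg_s4 S k, B_le_alpha S k]

lemma pow_alpha (S : HstarSystem) (k : ℕ) : S.r ^ S.nseq k * S.alphaC k ≤ 1 := by
  have ha : 0 < S.alphaC k := lt_of_lt_of_le one_pos (alpha_ge_one S k)
  have h : -Real.log (S.alphaC k) / Real.log S.r < S.nseq k := by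
    have h1 := S.hn k
    have h2 := Int.lt_floor_add_one (-Real.log (S.alphaC k) / Real.log S.r)
    have h3 : ((⌊-Real.log (S.alphaC k) / Real.log S.r⌋ + 1 : ℤ) : ℝ) ≤ ((S.nseq k : ℤ) : ℝ) :=
      Int.cast_le.2 h1
    push_cast at h3
    linarith
  have hl : Real.log S.r < 0 := Real.log_neg S.hr.1 S.hr.2
  rw [div_lt_iff_of_neg hl] at h
  have hp : 0 < S.r ^ S.nseq k * S.alphaC k := mul_pos (pow_pos S.hr.1 _) ha
  rw [← Real.log_nonpos_iff hp.le, Real.log_mul (pow_pos S.hr.1 _).ne' ha.ne', Real.log_pow]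
  linarith

lemma acc_le (S : HstarSystem) (k : ℕ) :
    accC S.κ S.r k (S.nseq k) (S.alphaC k) ≤ S.alphaC (k + S.nseq k) := by
  rw [accC_eq]
  have h : ∑ i ∈ Finset.Icc 1 (S.nseq k), S.κ (k + S.nseq k - i) * S.r ^ i ≤
      logB S.κ S.r (k + S.nseq k) := by
    refine Finset.sum_le_sum_of_subset_of_nonneg ?_ fun i _ _ =>
      mul_nonneg (S.κnonneg _) (pow_nonneg S.hr.1.le _)
    exact Finset.Icc_subset_Icc_right (by omega)
  linarith [one_le_B S (k + S.nseq k), B_le_alpha S (k + S.nseq k), pow_alpha S k]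

lemma FC_le_dbar (S : HstarSystem) (k : ℕ) {c : ℝ} (hc : c ≤ S.alphaC k) (z : Seq × Seq) :
    FC S.r c z ≤ ENNReal.ofReal (S.dbar k z.1 z.2) := by
  have hd := dr_nonneg S.hr.1 z.1 z.2
  unfold FC HstarSystem.dbar
  split_ifs with h
  · rw [ENNReal.ofReal_min, ENNReal.ofReal_one]
    exact min_le_min le_rfl (ENNReal.ofReal_le_ofReal (mul_le_mul_of_nonneg_right hc hd))
  · have hne : z.1 ≠ z.2 := fun hh => h (by rw [hh])
    have h1 : dr S.r z.1 z.2 = 1 := by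
      rw [dr, if_neg hne]
      have : sInf {i | z.1 i ≠ z.2 i} = 0 := Nat.le_zero.1 (Nat.sInf_le h)
      rw [this, pow_zero]
    rw [h1, mul_one, min_eq_left (alpha_ge_one S k), ENNReal.ofReal_one]

lemma dbar_le_FC (S : HstarSystem) (k : ℕ) (z : Seq × Seq) :
    ENNReal.ofReal (S.dbar k z.1 z.2) ≤ FC S.r (S.alphaC k) z := by
  unfold FC HstarSystem.dbar
  rw [ENNReal.ofReal_min, ENNReal.ofReal_one]
  split_ifs
  · exact le_rfl
  · exact min_le_left _ _

lemma dbar_nonneg (S : HstarSystem) (k : ℕ) (x y : Seq) : 0 ≤ S.dbar k x y :=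
  le_min zero_le_one (mul_nonneg (zero_le_one.trans (alpha_ge_one S k)) (dr_nonneg S.hr.1 x y))

lemma integral_dbar (S : HstarSystem) (k : ℕ) (m : Measure (Seq × Seq)) :
    ∫ z, S.dbar k z.1 z.2 ∂m = (∫⁻ z, ENNReal.ofReal (S.dbar k z.1 z.2) ∂m).toReal := by
  refine integral_eq_lintegral_of_nonneg_ae (Eventually.of_forall fun z => dbar_nonneg S k _ _) ?_
  have : Measurable fun z : Seq × Seq => S.dbar k z.1 z.2 :=
    measurable_const.min ((measurable_dr S.hr.1 S.hr.2).const_mul _)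
  exact this.aestronglyMeasurable

/-- (Lemma, part (iii).) Under property `(H*)`, the dual Ruelle operator over
`n_k` steps does not increase the Vasershtein distance with respect to the metrics `d̄`. -/
theorem dual_ruelle_wasserstein_nonexpansive (S : HstarSystem) (k : ℕ)
    (μ ν : Measure Seq)
    (hμp : IsProbabilityMeasure μ) (hμs : μ (Sig S.W S.A (k + S.nseq k)) = 1)
    (hνp : IsProbabilityMeasure ν) (hνs : ν (Sig S.W S.A (k + S.nseq k)) = 1) :
    Wass (S.dbar k) (dualRuelleIter S.W S.A S.φ k (S.nseq k) μ)
        (dualRuelleIter S.W S.A S.φ k (S.nseq k) ν) ≤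
      Wass (S.dbar (k + S.nseq k)) μ ν := by
  have hae : ∀ (ρ : Measure Seq), IsProbabilityMeasure ρ → ρ (Sig S.W S.A (k + S.nseq k)) = 1 →
      ∀ᵐ x ∂ρ, x ∈ Sig S.W S.A (k + S.nseq k) := fun ρ hρ h =>
    (prob_compl_eq_zero_iff (measurableSet_Sig _ _ _)).2 h
  unfold Wass
  refine le_csInf ⟨_, μ.prod ν, ?_, ?_, rfl⟩ ?_
  · simp [Measure.map_fst_prod]
  · simp [Measure.map_snd_prod]
  rintro t ⟨m, h1, h2, rfl⟩
  have hm1 := hae μ hμp hμs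
  have hm2 := hae ν hνp hνs
  rw [← h1] at hm1
  rw [← h2] at hm2
  obtain ⟨-, -, m', e1, e2, hm'⟩ := iter_couple S (S.nseq k) k m hm1 hm2
  rw [h1] at e1
  rw [h2] at e2
  refine le_trans (csInf_le (a := ∫ z, S.dbar k z.1 z.2 ∂m') ⟨0, ?_⟩ ⟨m', e1, e2, rfl⟩) ?_
  · rintro t ⟨q, -, -, rfl⟩
    exact integral_nonneg fun z => dbar_nonneg S k _ _
  have huniv : m Set.univ = 1 := by
    have : (m.map Prod.fst) Set.univ = 1 := by rw [h1]; exact measure_univ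
    rwa [Measure.map_apply measurable_fst MeasurableSet.univ, Set.preimage_univ] at this
  rw [integral_dbar, integral_dbar]
  refine ENNReal.toReal_mono ?_ ?_
  · refine ne_top_of_le_ne_top ENNReal.one_ne_top ?_
    calc ∫⁻ z, ENNReal.ofReal (S.dbar (k + S.nseq k) z.1 z.2) ∂m ≤ ∫⁻ _, 1 ∂m :=
          lintegral_mono fun z => (dbar_le_FC S _ z).trans (FC_le_one _ _ _)
      _ = 1 := by rw [lintegral_one, huniv]
  · calc ∫⁻ z, ENNReal.ofReal (S.dbar k z.1 z.2) ∂m'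
        ≤ ∫⁻ z, FC S.r (S.alphaC k) z ∂m' := lintegral_mono fun z => dbar_le_FC S k z
      _ ≤ ∫⁻ z, FC S.r (accC S.κ S.r k (S.nseq k) (S.alphaC k)) z ∂m :=
          hm' _ (zero_le_one.trans (alpha_ge_one S k))
      _ ≤ _ := lintegral_mono fun z => FC_le_dbar S _ (acc_le S k) z

end NSShift
end
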